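/- For every dimension n ≥ 1 there exist δ > 0 and a constant C, depending only on n, such that for every ball B = B(x,r) in ℝⁿ and every function u harmonic on the ball 3B = B(x,3r), one has the reverse Hölder inequality ((1/|B|)∫_{B} |∇u|^{2+δ} dx)^{1/(2+δ)} ≤ C·((1/|2B|)∫_{2B} |∇u|² dx)^{1/2}. -/

import Mathlib

/-!
Let `φ(y) = deriv g (‖y‖²)` be a radial kernel, where `g = 0` on `[1, ∞)`. Since `2 φ(y) y` is the
gradient of the compactly supported function `g(‖y‖²)`, an integration by parts turns the
`t`-derivative of `∫ φ(y) v(z + t y) dy` into an integral of `Δv`, so a harmonic `v` satisfies the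
mean value property `∫ φ(y) v(z + r y) dy = (∫ φ) v(z)`. Differentiating in `z`, so does the
gradient of a harmonic function. Hence the gradient on a ball is bounded pointwise by its average
over the doubled ball, and Jensen's inequality compares all its normalized `Lᵖ` norms; `δ = 1`
works.
-/

open MeasureTheory Metric ENNReal

/-- `u` is harmonic on `U`: it is `C²` on `U` and `Δu = Σⱼ ∂²u/∂xⱼ² = 0` on `U`. -/
def IsHarmonicOn {n : ℕ} (u : EuclideanSpace ℝ (Fin n) → ℝ)
    (U : Set (EuclideanSpace ℝ (Fin n))) : Prop :=
  ContDiffOn ℝ 2 u U ∧ ∀ x ∈ U,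
    ∑ j : Fin n,
      fderiv ℝ (fun y => fderiv ℝ u y (EuclideanSpace.single j (1 : ℝ))) x
        (EuclideanSpace.single j (1 : ℝ)) = 0

section Kernel

lemma exists_contDiff_eq_zero_monotone_deriv_ne_zero :
    ∃ g : ℝ → ℝ, ContDiff ℝ 1 g ∧ (∀ s, 1 ≤ s → g s = 0) ∧ Monotone g ∧ deriv g 0 ≠ 0 := by
  refine ⟨fun s ↦ -expNegInvGlue (1 - s), ?_, fun s hs ↦ ?_, fun s t hst ↦ ?_, ?_⟩
  · exact (expNegInvGlue.contDiff.comp (contDiff_const.sub contDiff_id)).neg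
  · simpa using hs
  · exact neg_le_neg (expNegInvGlue.monotone (by linarith))
  · have hglue : HasDerivAt expNegInvGlue (expNegInvGlue 1) (1 - 0) := by
      simpa using expNegInvGlue.hasDerivAt_polynomial_eval_inv_mul 1 (1 - 0)
    have hg : HasDerivAt (fun s ↦ -expNegInvGlue (1 - s)) (expNegInvGlue 1) 0 := by
      simpa using (hglue.comp_const_sub 1 0).fun_neg
    exact hg.deriv ▸ (expNegInvGlue.pos_of_pos one_pos).ne'

variable {E : Type*} [NormedAddCommGroup E] {g : ℝ → ℝ}

lemma hasCompactSupport_comp_norm_sq [NormedSpace ℝ E] [FiniteDimensional ℝ E]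
    (hg : ∀ s, 1 < s → g s = 0) : HasCompactSupport fun y : E ↦ g (‖y‖ ^ 2) :=
  .intro (isCompact_closedBall 0 1) fun y hy ↦
    hg _ <| one_lt_pow₀ (by simpa using hy) two_ne_zero

lemma deriv_eq_zero_of_forall_le {a s : ℝ} (hg : ∀ t, a ≤ t → g t = 0) (hs : a < s) :
    deriv g s = 0 := by
  have hzero : g =ᶠ[nhds s] fun _ ↦ 0 := by
    filter_upwards [lt_mem_nhds hs] with t ht using hg t ht.le
  rw [hzero.deriv_eq, deriv_const]

lemma continuous_deriv_comp_norm_sq (hg : ContDiff ℝ 1 g) :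
    Continuous fun y : E ↦ deriv g (‖y‖ ^ 2) :=
  (hg.continuous_deriv le_rfl).comp (by fun_prop)

lemma hasCompactSupport_deriv_comp_norm_sq [NormedSpace ℝ E] [FiniteDimensional ℝ E]
    (hg1 : ∀ s, 1 ≤ s → g s = 0) : HasCompactSupport fun y : E ↦ deriv g (‖y‖ ^ 2) :=
  hasCompactSupport_comp_norm_sq fun _ ↦ deriv_eq_zero_of_forall_le hg1

end Kernel

section NormalizedRestriction

open ProbabilityTheory

variable {X F : Type*} [MeasurableSpace X] [NormedAddCommGroup F] {μ : Measure X} {s t : Set X}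

lemma lintegral_cond (f : X → ℝ≥0∞) :
    ∫⁻ y, f y ∂μ[|s] = (μ s)⁻¹ * ∫⁻ y in s, f y ∂μ := by
  rw [ProbabilityTheory.cond, lintegral_smul_measure, smul_eq_mul]

lemma eLpNorm_cond_eq {p : ℝ≥0∞} (hp₀ : p ≠ 0) (hp : p ≠ ⊤) (f : X → F) :
    eLpNorm f p μ[|s] =
      ((μ s)⁻¹ * ∫⁻ y in s, ‖f y‖ₑ ^ p.toReal ∂μ) ^ (1 / p.toReal) := by
  rw [eLpNorm_eq_lintegral_rpow_enorm_toReal hp₀ hp, lintegral_cond]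

lemma eLpNorm_one_cond_le_of_subset (hst : s ⊆ t) (ht₀ : μ t ≠ 0) (ht : μ t ≠ ⊤) (f : X → F) :
    eLpNorm f 1 μ[|s] ≤ μ t / μ s * eLpNorm f 1 μ[|t] := by
  have hle : μ[|s] ≤ (μ t / μ s) • μ[|t] := by
    rw [ProbabilityTheory.cond, ProbabilityTheory.cond, smul_smul, div_eq_mul_inv,
      mul_right_comm, ENNReal.mul_inv_cancel ht₀ ht, one_mul]
    gcongr
  simpa using eLpNorm_le_of_measure_le_smul hle (f := f) (p := 1)

lemma eLpNorm_le_of_ae_enorm_le [IsProbabilityMeasure μ] {f : X → F} {K : ℝ≥0∞}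
    (hf : ∀ᵐ y ∂μ, ‖f y‖ₑ ≤ K) (p : ℝ≥0∞) : eLpNorm f p μ ≤ K := by
  simpa using eLpNorm_le_of_ae_enorm_bound hf (p := p)

end NormalizedRestriction

section Calculus

open Filter Topology ProbabilityTheory
open scoped Manifold ContDiff

variable {E F : Type*} [NormedAddCommGroup E] [NormedSpace ℝ E] [NormedAddCommGroup F]
  [NormedSpace ℝ F]

lemma exists_contDiff_eventuallyEq_nhdsSet [FiniteDimensional ℝ E] {n : ℕ∞} {u : E → F}
    {K U : Set E} (hK : IsClosed K) (hU : IsOpen U) (hKU : K ⊆ U) (hu : ContDiffOn ℝ n u U) :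
    ∃ v : E → F, ContDiff ℝ n v ∧ v =ᶠ[𝓝ˢ K] u := by
  obtain ⟨χ, hχ_zero, hχ_one, -⟩ := exists_contMDiffMap_zero_one_nhds_of_isClosed (n := n)
    𝓘(ℝ, E) hU.isClosed_compl hK (Set.disjoint_left.2 fun y hy hyK ↦ hy (hKU hyK))
  refine ⟨fun y ↦ χ y • u y, contDiff_iff_contDiffAt.2 fun y ↦ ?_, ?_⟩
  · by_cases hy : y ∈ U
    · exact χ.contMDiff.contDiff.contDiffAt.smul (hu.contDiffAt (hU.mem_nhds hy))
    · have hχ_near : ∀ᶠ w in 𝓝 y, χ w = 0 := hχ_zero.filter_mono (nhds_le_nhdsSet hy)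
      refine contDiffAt_const (c := (0 : F)) |>.congr_of_eventuallyEq ?_
      filter_upwards [hχ_near] with w hw using by rw [hw, zero_smul]
  · filter_upwards [hχ_one] with y hy using by rw [hy, one_smul]

lemma hasFDerivAt_integral_smul_of_hasCompactSupport {P X : Type*} [NormedAddCommGroup P]
    [NormedSpace ℝ P] [TopologicalSpace X] [SecondCountableTopology X] [MeasurableSpace X]
    [OpensMeasurableSpace X] {μ : Measure X} [IsFiniteMeasureOnCompacts μ] {φ : X → ℝ}
    (hφ : Continuous φ) (hφc : HasCompactSupport φ) {G : P → X → F} {G' : P → X → P →L[ℝ] F}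
    (hG : ∀ p, Continuous (G p)) (hG' : Continuous fun q : P × X ↦ G' q.1 q.2)
    (hGG' : ∀ p y, HasFDerivAt (G · y) (G' p y) p) (p₀ : P) :
    HasFDerivAt (fun p ↦ ∫ y, φ y • G p y ∂μ) (∫ y, φ y • G' p₀ y ∂μ) p₀ := by
  have hG'₀ : Continuous (G' p₀) := hG'.comp (Continuous.prodMk_right p₀)
  obtain ⟨M, hM⟩ := hφc.isCompact.exists_bound_of_continuousOn hG'₀.continuousOn
  have hG'_bound : ∀ᶠ p in 𝓝 p₀, ∀ y ∈ tsupport φ, ‖G' p y‖ < M + 1 :=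
    hφc.isCompact.eventually_forall_of_forall_eventually fun y hy ↦
      hG'.norm.continuousAt.eventually_lt_const ((hM y hy).trans_lt (lt_add_one M))
  refine hasFDerivAt_integral_of_dominated_of_fderiv_le
    (F' := fun p y ↦ φ y • G' p y) (bound := fun y ↦ ‖φ y‖ * (M + 1)) hG'_bound
    (.of_forall fun p ↦ (hφ.smul (hG p)).aestronglyMeasurable)
    ((hφ.smul (hG p₀)).integrable_of_hasCompactSupport hφc.smul_right)
    (hφ.smul hG'₀).aestronglyMeasurable (.of_forall fun y p hp ↦ ?_)
    ((hφ.norm.mul continuous_const).integrable_of_hasCompactSupport hφc.norm.mul_right)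
    (.of_forall fun y p _ ↦ (hGG' p y).const_smul (φ y))
  rw [norm_smul]
  by_cases hy : y ∈ tsupport φ
  · gcongr
    exact (hp y hy).le
  · simp [image_eq_zero_of_notMem_tsupport hy]

variable [MeasurableSpace E] [BorelSpace E] [FiniteDimensional ℝ E] {μ : Measure E}
  [μ.IsAddHaarMeasure]

lemma integral_fderiv_smul_eq_neg_of_hasCompactSupport {f : E → ℝ} {g : E → F}
    (hf : ContDiff ℝ 1 f) (hfc : HasCompactSupport f) (hg : ContDiff ℝ 1 g) (e : E) :
    ∫ y, fderiv ℝ f y e • g y ∂μ = -∫ y, f y • fderiv ℝ g y e ∂μ := by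
  have hf' : Continuous (fderiv ℝ f · e) := (hf.continuous_fderiv one_ne_zero).clm_apply
    continuous_const
  have hg' : Continuous (fderiv ℝ g · e) := (hg.continuous_fderiv one_ne_zero).clm_apply
    continuous_const
  rw [integral_smul_fderiv_eq_neg_fderiv_smul_of_integrable, neg_neg]
  · exact (hf'.smul hg.continuous).integrable_of_hasCompactSupport
      (hfc.fderiv_apply (𝕜 := ℝ) e).smul_right
  · exact (hf.continuous.smul hg').integrable_of_hasCompactSupport hfc.smul_right
  · exact (hf.continuous.smul hg.continuous).integrable_of_hasCompactSupport hfc.smul_right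
  · exact fun y _ ↦ hf.differentiable one_ne_zero y
  · exact fun y _ ↦ hg.differentiable one_ne_zero y

lemma hasFDerivAt_integral_smul_comp_add_smul {φ : E → ℝ} {v : E → F} (hφ : Continuous φ)
    (hφc : HasCompactSupport φ) (hv : ContDiff ℝ 1 v) (r : ℝ) (z : E) :
    HasFDerivAt (fun z ↦ ∫ y, φ y • v (z + r • y) ∂μ)
      (∫ y, φ y • fderiv ℝ v (z + r • y) ∂μ) z :=
  hasFDerivAt_integral_smul_of_hasCompactSupport hφ hφc
    (G := fun z y ↦ v (z + r • y)) (G' := fun z y ↦ fderiv ℝ v (z + r • y))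
    (fun z ↦ hv.continuous.comp (by fun_prop))
    ((hv.continuous_fderiv one_ne_zero).comp (by fun_prop))
    (fun z y ↦ (hasFDerivAt_comp_add_right (r • y)).2
      (hv.differentiable one_ne_zero _).hasFDerivAt) z

lemma hasDerivAt_integral_smul_comp_add_smul {φ : E → ℝ} {v : E → F}
    (hφ : Continuous φ) (hφc : HasCompactSupport φ) (hv : ContDiff ℝ 1 v) (z : E) (t : ℝ) :
    HasDerivAt (fun t : ℝ ↦ ∫ y, φ y • v (z + t • y) ∂μ)
      (∫ y, φ y • fderiv ℝ v (z + t • y) y ∂μ) t := by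
  let S := ContinuousLinearMap.toSpanSingletonCLE (𝕜 := ℝ) (E := F)
  have hpath : ∀ (t : ℝ) (y : E),
      HasFDerivAt (fun t : ℝ ↦ v (z + t • y)) (S (fderiv ℝ v (z + t • y) y)) t := fun t y ↦ by
    have hline : HasDerivAt (fun t : ℝ ↦ z + t • y) y t := by
      simpa using ((hasDerivAt_id t).smul_const y).const_add z
    exact ((hv.differentiable one_ne_zero _).hasFDerivAt.comp_hasDerivAt t hline).hasFDerivAt
  have hderiv := hasFDerivAt_integral_smul_of_hasCompactSupport (μ := μ) hφ hφc
    (G := fun (t : ℝ) y ↦ v (z + t • y)) (G' := fun t y ↦ S (fderiv ℝ v (z + t • y) y))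
    (fun t ↦ hv.continuous.comp (by fun_prop))
    (S.continuous.comp (((hv.continuous_fderiv one_ne_zero).comp (by fun_prop)).clm_apply
      continuous_snd)) hpath t
  simp_rw [← map_smul] at hderiv
  rw [S.integral_comp_comm] at hderiv
  simpa [S] using hderiv.hasDerivAt

lemma lintegral_comp_add_smul (f : E → ℝ≥0∞) (z : E) {r : ℝ} (hr : r ≠ 0) :
    ∫⁻ y, f (z + r • y) ∂μ =
      ENNReal.ofReal |(r ^ Module.finrank ℝ E)⁻¹| * ∫⁻ y, f y ∂μ := by
  have hmap : ∫⁻ y, f (z + y) ∂(μ.map (r • ·)) = ∫⁻ y, f (z + r • y) ∂μ :=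
    (Homeomorph.smulOfNeZero r hr).measurableEmbedding.lintegral_map _
  rw [← hmap, Measure.map_addHaar_smul μ hr, lintegral_smul_measure, smul_eq_mul,
    lintegral_add_left_eq_self]

lemma lintegral_cond_ball_comp_add_smul (f : E → ℝ≥0∞) (z : E) {r : ℝ} (hr : 0 < r) (s : ℝ) :
    ∫⁻ y, f (z + r • y) ∂μ[|ball 0 s] = ∫⁻ y, f y ∂μ[|ball z (r * s)] := by
  have hpre : (fun y ↦ z + r • y) ⁻¹' ball z (r * s) = ball 0 s := by
    ext y
    rw [Set.mem_preimage, mem_ball_zero_iff, mem_ball_iff_norm, add_sub_cancel_left, norm_smul,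
      Real.norm_of_nonneg hr.le, mul_lt_mul_iff_right₀ hr]
  have hind : ∀ y, (ball 0 s).indicator (fun y ↦ f (z + r • y)) y =
      (ball z (r * s)).indicator f (z + r • y) := fun y ↦ by
    rw [← hpre]
    exact Set.indicator_comp_right _
  rw [lintegral_cond, lintegral_cond, ← lintegral_indicator measurableSet_ball,
    ← lintegral_indicator measurableSet_ball]
  simp_rw [hind]
  rw [lintegral_comp_add_smul _ z hr.ne', Measure.addHaar_ball_mul_of_pos μ z hr,
    ENNReal.mul_inv (by simp [hr]) (by simp), abs_of_pos (by positivity),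
    ENNReal.ofReal_inv_of_pos (by positivity)]
  ring

lemma lintegral_enorm_smul_comp_add_smul_le {φ : E → ℝ} {M s : ℝ} (hs : 0 < s)
    (hM : ∀ y, ‖φ y‖ ≤ M) (hφ : ∀ y, s ≤ ‖y‖ → φ y = 0) (f : E → F) (z : E) {r : ℝ} (hr : 0 < r) :
    ∫⁻ y, ‖φ y • f (z + r • y)‖ₑ ∂μ ≤
      ENNReal.ofReal M * μ (ball 0 s) * ∫⁻ y, ‖f y‖ₑ ∂μ[|ball z (r * s)] := calc
  _ ≤ ∫⁻ y, (ball 0 s).indicator (fun y ↦ ENNReal.ofReal M * ‖f (z + r • y)‖ₑ) y ∂μ := by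
    refine lintegral_mono fun y ↦ ?_
    by_cases hy : y ∈ ball 0 s
    · rw [Set.indicator_of_mem hy, enorm_smul]
      gcongr
      exact (ofReal_norm (φ y)).symm.trans_le (ENNReal.ofReal_le_ofReal (hM y))
    · simp [hφ y (by simpa using hy)]
  _ = ENNReal.ofReal M * ∫⁻ y in ball 0 s, ‖f (z + r • y)‖ₑ ∂μ := by
    rw [lintegral_indicator measurableSet_ball, lintegral_const_mul' _ _ ENNReal.ofReal_ne_top]
  _ = _ := by
    rw [← lintegral_cond_ball_comp_add_smul _ z hr, lintegral_cond, mul_assoc,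
      ENNReal.mul_inv_cancel_left (measure_ball_pos μ 0 hs).ne' measure_ball_lt_top.ne]

end Calculus

section Radial

variable {E F : Type*} [NormedAddCommGroup E] [InnerProductSpace ℝ E] [NormedAddCommGroup F]
  [NormedSpace ℝ F] {g : ℝ → ℝ}

lemma fderiv_comp_norm_sq_apply (hg : Differentiable ℝ g) (y w : E) :
    fderiv ℝ (fun y : E ↦ g (‖y‖ ^ 2)) y w = 2 * deriv g (‖y‖ ^ 2) * inner ℝ y w := by
  have hderiv : HasFDerivAt (fun y : E ↦ g (‖y‖ ^ 2)) (deriv g (‖y‖ ^ 2) • 2 • innerSL ℝ y) y :=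
    (hg (‖y‖ ^ 2)).hasDerivAt.comp_hasFDerivAt y (hasStrictFDerivAt_norm_sq y).hasFDerivAt
  rw [hderiv.fderiv]
  simp [mul_comm, mul_left_comm]

lemma sum_fderiv_comp_norm_sq_smul {ι : Type*} [Fintype ι] (b : OrthonormalBasis ι ℝ E)
    (hg : Differentiable ℝ g) (L : E →L[ℝ] F) (y : E) :
    ∑ j, fderiv ℝ (fun y : E ↦ g (‖y‖ ^ 2)) y (b j) • L (b j) =
      (2 * deriv g (‖y‖ ^ 2)) • L y := by
  have hL : L y = ∑ j, inner ℝ y (b j) • L (b j) := by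
    conv_lhs => rw [← b.sum_repr' y, map_sum]
    simp_rw [map_smul, real_inner_comm]
  simp_rw [hL, fderiv_comp_norm_sq_apply hg, Finset.smul_sum, smul_smul]

end Radial

section MeanValue

open InnerProductSpace Laplacian Topology

variable {E F : Type*} [NormedAddCommGroup E] [InnerProductSpace ℝ E] [FiniteDimensional ℝ E]
  [NormedAddCommGroup F] [NormedSpace ℝ F]

lemma sum_fderiv_fderiv_apply_eq_laplacian {ι : Type*} [Fintype ι] (b : OrthonormalBasis ι ℝ E)
    {u : E → F} {x : E} (hu : ContDiffAt ℝ 2 u x) :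
    ∑ j, fderiv ℝ (fun y ↦ fderiv ℝ u y (b j)) x (b j) = (Δ u) x := by
  have hdiff : DifferentiableAt ℝ (fderiv ℝ u) x :=
    (hu.fderiv_right (m := 1) (by norm_num)).differentiableAt one_ne_zero
  simp [laplacian_eq_iteratedFDeriv_orthonormalBasis u b, iteratedFDeriv_two_apply,
    fderiv_clm_apply hdiff (differentiableAt_const _)]

variable [MeasurableSpace E] [BorelSpace E] {μ : Measure E} [μ.IsAddHaarMeasure] {g : ℝ → ℝ}
  {v : E → F} {z : E} {r R : ℝ}

lemma two_smul_integral_deriv_norm_sq_smul_apply_self {ι : Type*} [Fintype ι]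
    (b : OrthonormalBasis ι ℝ E) (hg : ContDiff ℝ 1 g) (hg1 : ∀ s, 1 ≤ s → g s = 0)
    {A : E → E →L[ℝ] F} (hA : ContDiff ℝ 1 A) :
    (2 : ℝ) • ∫ y, deriv g (‖y‖ ^ 2) • A y y ∂μ =
      -∫ y, g (‖y‖ ^ 2) • ∑ j, fderiv ℝ (A · (b j)) y (b j) ∂μ := by
  have hΨ : ContDiff ℝ 1 fun y : E ↦ g (‖y‖ ^ 2) := hg.comp (contDiff_norm_sq ℝ)
  have hΨc : HasCompactSupport fun y : E ↦ g (‖y‖ ^ 2) :=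
    hasCompactSupport_comp_norm_sq fun s hs ↦ hg1 s hs.le
  have hAb : ∀ j, ContDiff ℝ 1 (A · (b j)) := fun j ↦ hA.clm_apply contDiff_const
  have hint : ∀ j, Integrable
      (fun y ↦ fderiv ℝ (fun y : E ↦ g (‖y‖ ^ 2)) y (b j) • A y (b j)) μ := fun j ↦
    (((hΨ.continuous_fderiv one_ne_zero).clm_apply continuous_const).smul
      (hAb j).continuous).integrable_of_hasCompactSupport
        (hΨc.fderiv_apply (𝕜 := ℝ) (b j)).smul_right
  have hint' : ∀ j, Integrable (fun y ↦ g (‖y‖ ^ 2) • fderiv ℝ (A · (b j)) y (b j)) μ := fun j ↦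
    (hΨ.continuous.smul (((hAb j).continuous_fderiv one_ne_zero).clm_apply
      continuous_const)).integrable_of_hasCompactSupport hΨc.smul_right
  calc (2 : ℝ) • ∫ y, deriv g (‖y‖ ^ 2) • A y y ∂μ
    _ = ∫ y, ∑ j, fderiv ℝ (fun y : E ↦ g (‖y‖ ^ 2)) y (b j) • A y (b j) ∂μ := by
      simp_rw [sum_fderiv_comp_norm_sq_smul b (hg.differentiable one_ne_zero), mul_smul,
        integral_smul]
    _ = ∑ j, -∫ y, g (‖y‖ ^ 2) • fderiv ℝ (A · (b j)) y (b j) ∂μ := by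
      rw [integral_finsetSum _ fun j _ ↦ hint j]
      exact Finset.sum_congr rfl fun j _ ↦
        integral_fderiv_smul_eq_neg_of_hasCompactSupport hΨ hΨc (hAb j) (b j)
    _ = -∫ y, g (‖y‖ ^ 2) • ∑ j, fderiv ℝ (A · (b j)) y (b j) ∂μ := by
      simp_rw [Finset.smul_sum]
      rw [Finset.sum_neg_distrib, integral_finsetSum _ fun j _ ↦ hint' j]

lemma integral_deriv_norm_sq_smul_fderiv_apply_self_eq_zero (hg : ContDiff ℝ 1 g)
    (hg1 : ∀ s, 1 ≤ s → g s = 0) (hv : ContDiff ℝ 2 v) (hΔ : ∀ x ∈ ball z R, (Δ v) x = 0)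
    {t : ℝ} (ht : |t| < R) :
    ∫ y, deriv g (‖y‖ ^ 2) • fderiv ℝ v (z + t • y) y ∂μ = 0 := by
  set b := stdOrthonormalBasis ℝ E
  have hA : ContDiff ℝ 1 fun y ↦ fderiv ℝ v (z + t • y) :=
    (hv.fderiv_right (m := 1) (by norm_num)).comp (by fun_prop)
  have hdiv : ∀ y, ∑ j, fderiv ℝ (fun y ↦ fderiv ℝ v (z + t • y) (b j)) y (b j) =
      t • (Δ v) (z + t • y) := fun y ↦ by
    rw [← sum_fderiv_fderiv_apply_eq_laplacian b hv.contDiffAt, Finset.smul_sum]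
    refine Finset.sum_congr rfl fun j _ ↦ ?_
    rw [fderiv_comp_smul (f := fun w ↦ fderiv ℝ v (z + w) (b j)),
      fderiv_comp_add_left (f := fun w ↦ fderiv ℝ v w (b j)), smul_apply]
  have hzero : ∀ y, g (‖y‖ ^ 2) • t • (Δ v) (z + t • y) = 0 := fun y ↦ by
    rcases le_or_gt 1 ‖y‖ with hy | hy
    · rw [hg1 _ (one_le_pow₀ hy), zero_smul]
    · rw [hΔ, smul_zero, smul_zero]
      rw [mem_ball_iff_norm, add_sub_cancel_left, norm_smul, Real.norm_eq_abs]
      exact (mul_le_of_le_one_right (abs_nonneg t) hy.le).trans_lt ht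
  have hparts := two_smul_integral_deriv_norm_sq_smul_apply_self (μ := μ) b hg hg1 hA
  simp_rw [hdiv, hzero, integral_zero, neg_zero] at hparts
  exact (smul_eq_zero_iff_right two_ne_zero).1 hparts

variable [CompleteSpace F]

lemma integral_deriv_norm_sq_smul_comp_add_smul (hg : ContDiff ℝ 1 g)
    (hg1 : ∀ s, 1 ≤ s → g s = 0) (hv : ContDiff ℝ 2 v) (hr : 0 ≤ r)
    (hΔ : ∀ x ∈ ball z r, (Δ v) x = 0) :
    ∫ y, deriv g (‖y‖ ^ 2) • v (z + r • y) ∂μ = (∫ y : E, deriv g (‖y‖ ^ 2) ∂μ) • v z := by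
  have hderiv := hasDerivAt_integral_smul_comp_add_smul (μ := μ)
    (continuous_deriv_comp_norm_sq hg) (hasCompactSupport_deriv_comp_norm_sq hg1)
    (hv.of_le one_le_two) z
  have hderiv_zero : ∀ t ∈ Set.Ico 0 r, HasDerivWithinAt
      (fun t : ℝ ↦ ∫ y, deriv g (‖y‖ ^ 2) • v (z + t • y) ∂μ) 0 (Set.Ici t) t := fun t ht ↦ by
    rw [← integral_deriv_norm_sq_smul_fderiv_apply_self_eq_zero (μ := μ) hg hg1 hv hΔ
      ((abs_of_nonneg ht.1).trans_lt ht.2)]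
    exact (hderiv t).hasDerivWithinAt
  have hconst := constant_of_has_deriv_right_zero
    (fun t _ ↦ (hderiv t).continuousAt.continuousWithinAt) hderiv_zero r (Set.right_mem_Icc.2 hr)
  simpa [integral_smul_const] using hconst

lemma integral_deriv_norm_sq_smul_fderiv_comp_add_smul (hg : ContDiff ℝ 1 g)
    (hg1 : ∀ s, 1 ≤ s → g s = 0) (hv : ContDiff ℝ 2 v) (hr : 0 ≤ r) (hrR : r < R)
    (hΔ : ∀ x ∈ ball z R, (Δ v) x = 0) :
    ∫ y, deriv g (‖y‖ ^ 2) • fderiv ℝ v (z + r • y) ∂μ =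
      (∫ y : E, deriv g (‖y‖ ^ 2) ∂μ) • fderiv ℝ v z := by
  have hmean : (fun w ↦ ∫ y, deriv g (‖y‖ ^ 2) • v (w + r • y) ∂μ) =ᶠ[𝓝 z]
      fun w ↦ (∫ y : E, deriv g (‖y‖ ^ 2) ∂μ) • v w := by
    filter_upwards [ball_mem_nhds z (sub_pos.2 hrR)] with w hw
    have hsub : ball w r ⊆ ball z R := ball_subset_ball' (by linarith [mem_ball.1 hw])
    exact integral_deriv_norm_sq_smul_comp_add_smul hg hg1 hv hr fun x hx ↦ hΔ x (hsub hx)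
  have hleft := hasFDerivAt_integral_smul_comp_add_smul (μ := μ)
    (continuous_deriv_comp_norm_sq hg) (hasCompactSupport_deriv_comp_norm_sq hg1)
    (hv.of_le one_le_two) r z
  exact hleft.unique <|
    ((hv.differentiable two_ne_zero z).hasFDerivAt.const_smul _).congr_of_eventuallyEq hmean

lemma integral_deriv_norm_sq_smul_fderiv_of_harmonicOnNhd {u : E → F} (hg : ContDiff ℝ 1 g)
    (hg1 : ∀ s, 1 ≤ s → g s = 0) (hr : 0 ≤ r) (hrR : r < R)
    (hu : HarmonicOnNhd u (ball z R)) :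
    ∫ y, deriv g (‖y‖ ^ 2) • fderiv ℝ u (z + r • y) ∂μ =
      (∫ y : E, deriv g (‖y‖ ^ 2) ∂μ) • fderiv ℝ u z := by
  obtain ⟨ρ, hrρ, hρR⟩ := exists_between hrR
  obtain ⟨v, hv, hvu⟩ := exists_contDiff_eventuallyEq_nhdsSet (n := 2) isClosed_closedBall
    isOpen_ball (closedBall_subset_ball (x := z) hρR) hu.contDiffOn
  have hvu' : ∀ x ∈ closedBall z ρ, v =ᶠ[𝓝 x] u := eventually_nhdsSet_iff_forall.1 hvu
  have hΔ : ∀ x ∈ ball z ρ, (Δ v) x = 0 := fun x hx ↦ by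
    rw [(laplacian_congr_nhds (hvu' x (ball_subset_closedBall hx))).eq_of_nhds]
    exact (hu x (ball_subset_ball hρR.le hx)).2.eq_of_nhds
  have hφ : ∀ y : E, deriv g (‖y‖ ^ 2) • fderiv ℝ v (z + r • y) =
      deriv g (‖y‖ ^ 2) • fderiv ℝ u (z + r • y) := fun y ↦ by
    rcases le_or_gt ‖y‖ 1 with hy | hy
    · rw [(hvu' (z + r • y) _).fderiv_eq]
      rw [mem_closedBall_iff_norm, add_sub_cancel_left, norm_smul, Real.norm_of_nonneg hr]
      exact (mul_le_of_le_one_right hr hy).trans hrρ.le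
    · rw [deriv_eq_zero_of_forall_le hg1 (one_lt_pow₀ hy two_ne_zero), zero_smul, zero_smul]
  rw [← (hvu' z (mem_closedBall_self (hr.trans hrρ.le))).fderiv_eq,
    ← integral_deriv_norm_sq_smul_fderiv_comp_add_smul hg hg1 hv hr hrρ hΔ]
  simp_rw [hφ]

end MeanValue

section Estimate

open InnerProductSpace ProbabilityTheory

variable {E : Type*} [NormedAddCommGroup E] [InnerProductSpace ℝ E] [FiniteDimensional ℝ E]
  [MeasurableSpace E] [BorelSpace E] (μ : Measure E) [μ.IsAddHaarMeasure]
  (F : Type*) [NormedAddCommGroup F] [NormedSpace ℝ F] [CompleteSpace F]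

lemma exists_enorm_fderiv_le_of_harmonicOnNhd :
    ∃ C : ℝ, 0 < C ∧ ∀ (z : E) (R : ℝ), 0 < R → ∀ u : E → F, HarmonicOnNhd u (ball z R) →
      ‖fderiv ℝ u z‖ₑ ≤ ENNReal.ofReal C * eLpNorm (fderiv ℝ u) 1 μ[|ball z R] := by
  obtain ⟨g, hg, hg1, hmono, hg0⟩ := exists_contDiff_eq_zero_monotone_deriv_ne_zero
  have hφ := continuous_deriv_comp_norm_sq (E := E) hg
  have hφc := hasCompactSupport_deriv_comp_norm_sq (E := E) hg1
  obtain ⟨M, hM⟩ := hφc.exists_bound_of_continuous hφ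
  set m := ∫ y : E, deriv g (‖y‖ ^ 2) ∂μ
  have hm : 0 < m := hφ.integral_pos_of_hasCompactSupport_nonneg_nonzero hφc
    (fun y ↦ hmono.deriv_nonneg) (x := 0) (by simpa using hg0)
  have hM_pos : 0 < M := (norm_pos_iff.2 hg0).trans_le (by simpa using hM 0)
  have hball : 0 < μ.real (ball (0 : E) 2) := ENNReal.toReal_pos
    (measure_ball_pos μ 0 two_pos).ne' measure_ball_lt_top.ne
  refine ⟨m⁻¹ * (M * μ.real (ball (0 : E) 2)), by positivity, fun z R hR u hu ↦ ?_⟩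
  have hmean : fderiv ℝ u z = m⁻¹ • ∫ y, deriv g (‖y‖ ^ 2) • fderiv ℝ u (z + (R / 2) • y) ∂μ := by
    rw [integral_deriv_norm_sq_smul_fderiv_of_harmonicOnNhd hg hg1 (by positivity)
      (half_lt_self hR) hu, inv_smul_smul₀ hm.ne']
  calc ‖fderiv ℝ u z‖ₑ
    _ ≤ ENNReal.ofReal m⁻¹ * ∫⁻ y, ‖deriv g (‖y‖ ^ 2) • fderiv ℝ u (z + (R / 2) • y)‖ₑ ∂μ := by
      rw [hmean, enorm_smul, Real.enorm_of_nonneg (by positivity)]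
      gcongr
      exact enorm_integral_le_lintegral_enorm _
    _ ≤ ENNReal.ofReal m⁻¹ * (ENNReal.ofReal M * μ (ball 0 2) *
          ∫⁻ y, ‖fderiv ℝ u y‖ₑ ∂μ[|ball z (R / 2 * 2)]) := by
      gcongr
      refine lintegral_enorm_smul_comp_add_smul_le two_pos hM (fun y hy ↦ ?_) _ z (half_pos hR)
      exact deriv_eq_zero_of_forall_le hg1 (by nlinarith)
    _ = _ := by
      rw [div_mul_cancel₀ R two_ne_zero, ← eLpNorm_one_eq_lintegral_enorm,
        ← ofReal_measureReal measure_ball_lt_top.ne, ← ENNReal.ofReal_mul hM_pos.le, ← mul_assoc,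
        ← ENNReal.ofReal_mul (by positivity)]

lemma exists_enorm_fderiv_le_eLpNorm_of_harmonicOnNhd :
    ∃ C : ℝ, 0 < C ∧ ∀ q : ℝ≥0∞, 1 ≤ q → ∀ (x z : E) (r : ℝ), z ∈ ball x r →
      ∀ u : E → F, HarmonicOnNhd u (ball x (2 * r)) →
        ‖fderiv ℝ u z‖ₑ ≤ ENNReal.ofReal C * eLpNorm (fderiv ℝ u) q μ[|ball x (2 * r)] := by
  obtain ⟨C, hC, hCle⟩ := exists_enorm_fderiv_le_of_harmonicOnNhd (μ := μ) (F := F)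
  refine ⟨C * 2 ^ Module.finrank ℝ E, by positivity, fun q hq x z r hz u hu ↦ ?_⟩
  have hr : 0 < r := pos_of_mem_ball hz
  have hball₀ : μ (ball x (2 * r)) ≠ 0 := (measure_ball_pos μ x (by positivity)).ne'
  have hball : μ (ball x (2 * r)) ≠ ⊤ := measure_ball_lt_top.ne
  have hprob : IsProbabilityMeasure μ[|ball x (2 * r)] :=
    cond_isProbabilityMeasure_of_finite hball₀ hball
  have hmeas : AEStronglyMeasurable (fderiv ℝ u) μ[|ball x (2 * r)] :=
    ((hu.contDiffOn.continuousOn_fderiv_of_isOpen isOpen_ball one_le_two).aestronglyMeasurable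
      measurableSet_ball).smul_measure _
  have hsub : ball z r ⊆ ball x (2 * r) := ball_subset_ball' (by linarith [mem_ball.1 hz])
  have hratio : μ (ball x (2 * r)) / μ (ball z r) = ENNReal.ofReal (2 ^ Module.finrank ℝ E) := by
    rw [Measure.addHaar_ball_mul_of_pos μ x two_pos, ← Measure.addHaar_ball_center μ z,
      ENNReal.mul_div_cancel_right (measure_ball_pos μ z hr).ne' measure_ball_lt_top.ne]
  calc ‖fderiv ℝ u z‖ₑ
    _ ≤ ENNReal.ofReal C * eLpNorm (fderiv ℝ u) 1 μ[|ball z r] :=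
      hCle z r hr u fun y hy ↦ hu y (hsub hy)
    _ ≤ ENNReal.ofReal C * (μ (ball x (2 * r)) / μ (ball z r) *
          eLpNorm (fderiv ℝ u) 1 μ[|ball x (2 * r)]) := by
      gcongr
      exact eLpNorm_one_cond_le_of_subset hsub hball₀ hball _
    _ ≤ ENNReal.ofReal C * (μ (ball x (2 * r)) / μ (ball z r) *
          eLpNorm (fderiv ℝ u) q μ[|ball x (2 * r)]) := by
      gcongr
      exact eLpNorm_le_eLpNorm_of_exponent_le hq hmeas
    _ = _ := by rw [hratio, ENNReal.ofReal_mul hC.le, mul_assoc]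

theorem statement11_general :
    ∃ C : ℝ, 0 < C ∧ ∀ p q : ℝ≥0∞, 1 ≤ q → ∀ (x : E) (r : ℝ), 0 < r →
      ∀ u : E → F, HarmonicOnNhd u (ball x (2 * r)) →
        eLpNorm (fderiv ℝ u) p μ[|ball x r] ≤
          ENNReal.ofReal C * eLpNorm (fderiv ℝ u) q μ[|ball x (2 * r)] := by
  obtain ⟨C, hC, hCle⟩ := exists_enorm_fderiv_le_eLpNorm_of_harmonicOnNhd (μ := μ) (F := F)
  refine ⟨C, hC, fun p q hq x r hr u hu ↦ ?_⟩
  have hprob : IsProbabilityMeasure μ[|ball x r] :=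
    cond_isProbabilityMeasure_of_finite (measure_ball_pos μ x hr).ne' measure_ball_lt_top.ne
  refine eLpNorm_le_of_ae_enorm_le ?_ p
  filter_upwards [ae_cond_mem measurableSet_ball] with z hz using hCle q hq x z r hz u hu

end Estimate

lemma IsHarmonicOn.harmonicOnNhd {n : ℕ} {u : EuclideanSpace ℝ (Fin n) → ℝ}
    {U : Set (EuclideanSpace ℝ (Fin n))} (hu : IsHarmonicOn u U) (hU : IsOpen U) :
    InnerProductSpace.HarmonicOnNhd u U := fun x hx ↦ by
  have hu₂ : ∀ y ∈ U, ContDiffAt ℝ 2 u y := fun y hy ↦ hu.1.contDiffAt (hU.mem_nhds hy)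
  refine ⟨hu₂ x hx, ?_⟩
  filter_upwards [hU.mem_nhds hx] with y hy
  rw [← sum_fderiv_fderiv_apply_eq_laplacian (EuclideanSpace.basisFun (Fin n) ℝ) (hu₂ y hy)]
  simpa using hu.2 y hy

/-- reverse Hölder inequality `(RH_{2+δ})` for gradients of
harmonic functions: there are `δ > 0` and `C` depending only on `n` such that
for `u` harmonic on `3B`,
`((1/|B|)∫_B |∇u|^{2+δ})^{1/(2+δ)} ≤ C ((1/|2B|)∫_{2B} |∇u|²)^{1/2}`. -/
theorem statement11 (n : ℕ) (hn : 1 ≤ n) :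
    ∃ δ C : ℝ, 0 < δ ∧ 0 < C ∧
      ∀ (x : EuclideanSpace ℝ (Fin n)) (r : ℝ), 0 < r →
      ∀ u : EuclideanSpace ℝ (Fin n) → ℝ, IsHarmonicOn u (ball x (3 * r)) →
        ((volume (ball x r))⁻¹ *
            ∫⁻ y in ball x r, (‖fderiv ℝ u y‖₊ : ℝ≥0∞) ^ (2 + δ)) ^ (1 / (2 + δ)) ≤
          ENNReal.ofReal C *
            ((volume (ball x (2 * r)))⁻¹ *
              ∫⁻ y in ball x (2 * r),
                (‖fderiv ℝ u y‖₊ : ℝ≥0∞) ^ (2 : ℝ)) ^ (1 / (2 : ℝ)) := by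
  obtain ⟨C, hC, hCle⟩ := statement11_general (volume : Measure (EuclideanSpace ℝ (Fin n))) ℝ
  refine ⟨1, C, one_pos, hC, fun x r hr u hu ↦ ?_⟩
  have hsub : ball x (2 * r) ⊆ ball x (3 * r) := ball_subset_ball (by linarith)
  have hRH := hCle 3 2 one_le_two x r hr u fun y hy ↦ hu.harmonicOnNhd isOpen_ball y (hsub hy)
  have htoReal : (3 : ℝ≥0∞).toReal = 2 + 1 := by norm_num
  rwa [eLpNorm_cond_eq three_ne_zero ofNat_ne_top, eLpNorm_cond_eq two_ne_zero ofNat_ne_top,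
    htoReal, toReal_ofNat] at hRH
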